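/- Let (U,ρ) be a complete metric space and let p ≥ 1. Then W_p(ℝ,U) = W(ℝ,U) ∩ M*_p(ℝ,U); that is, a function f ∈ M_p(ℝ,U) is Weyl almost periodic of order p if and only if f is Weyl almost periodic with respect to the bounded metric ρ' and f satisfies the M*_p uniform integrability condition. -/

import Mathlib

open MeasureTheory Filter Topology TopologicalSpace
open scoped ENNReal Pointwise

noncomputable section

/-- The truncated ("bounded") distance `ρ'(x,y) = min {1, ρ(x,y)}` on a metric space. -/
def bdist {α : Type*} [PseudoMetricSpace α] : α → α → ℝ := fun x y => min 1 (dist x y)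

/-- The Hausdorff distance `dist_{ρ'}` (corresponding to the truncated metric `ρ'`)
between non-empty closed subsets of a metric space. -/
def clDist {α : Type*} [MetricSpace α] : Closeds α → Closeds α → ℝ :=
  fun A B => (min 1 (EMetric.hausdorffEdist (A : Set α) (B : Set α))).toReal

/-- The Hausdorff distance `dist_ρ` between (non-empty closed bounded) subsets. -/
def clbDist {α : Type*} [MetricSpace α] : Closeds α → Closeds α → ℝ :=
  fun A B => Metric.hausdorffDist (A : Set α) (B : Set α)

/-- `D^{(d)}_{p,l}(f,g) = ( sup_ξ (1/l) ∫_ξ^{ξ+l} d(f t, g t)^p dt )^{1/p}`,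
valued in `ℝ≥0∞`. -/
def weylD {α : Type*} (d : α → α → ℝ) (p l : ℝ) (f g : ℝ → α) : ℝ≥0∞ :=
  (⨆ ξ : ℝ, ENNReal.ofReal (1 / l) *
      ∫⁻ t in Set.Icc ξ (ξ + l), ENNReal.ofReal (d (f t) (g t) ^ p)) ^ (1 / p)

/-- The Weyl semimetric `D^{(d)}_p(f,g) = lim_{l → +∞} D^{(d)}_{p,l}(f,g)`
(the limit exists; it is formalized here as a `limsup`). -/
def weylDinf {α : Type*} (d : α → α → ℝ) (p : ℝ) (f g : ℝ → α) : ℝ≥0∞ :=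
  Filter.limsup (fun l => weylD d p l f g) Filter.atTop

/-- Membership in `M_p(ℝ, α)`: `f` is (strongly) measurable and
`sup_ξ ∫_ξ^{ξ+1} d(f t, x₀)^p dt < +∞`. -/
def MemMp {α : Type*} [TopologicalSpace α] (d : α → α → ℝ) (p : ℝ) (x₀ : α)
    (f : ℝ → α) : Prop :=
  AEStronglyMeasurable f MeasureTheory.volume ∧
  ∃ C : ℝ, ∀ ξ : ℝ,
    (∫⁻ t in Set.Icc ξ (ξ + 1), ENNReal.ofReal (d (f t) x₀ ^ p)) ≤ ENNReal.ofReal C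

/-- A set `T ⊆ ℝ` is relatively dense. -/
def RelDense (T : Set ℝ) : Prop := ∃ a > 0, ∀ ξ : ℝ, (Set.Icc ξ (ξ + a) ∩ T).Nonempty

/-- The set of `(ε, D^{(d)}_{p,l})`-almost periods of `f`. -/
def APeriodsL {α : Type*} (d : α → α → ℝ) (p l ε : ℝ) (f : ℝ → α) : Set ℝ :=
  {τ | weylD d p l f (fun t => f (t + τ)) < ENNReal.ofReal ε}

/-- The set `P^{(d)}_p(ε; f)` of `(ε, D^{(d)}_p)`-almost periods of `f`. -/
def APeriods {α : Type*} (d : α → α → ℝ) (p ε : ℝ) (f : ℝ → α) : Set ℝ :=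
  {τ | weylDinf d p f (fun t => f (t + τ)) < ENNReal.ofReal ε}

/-- Membership in the space `W_p(ℝ, α)` of Weyl almost periodic functions of order `p`
w.r.t. the distance `d` (with distinguished point `x₀`). -/
def MemWp {α : Type*} [TopologicalSpace α] (d : α → α → ℝ) (p : ℝ) (x₀ : α)
    (f : ℝ → α) : Prop :=
  MemMp d p x₀ f ∧ ∀ ε > 0, ∃ l > 0, RelDense (APeriodsL d p l ε f)

/-- The module `Mod f`: the additive group of all `λ ∈ ℝ` such that `e^{iλτ_j} → 1`
for every `f`-returning sequence `{τ_j}` (a sequence with `D^{(d)}_1(f, f(·+τ_j)) → 0`,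
where `d` is the relevant bounded distance). -/
def WMod {α : Type*} (d : α → α → ℝ) (f : ℝ → α) : Set ℝ :=
  {lam : ℝ | ∀ τ : ℕ → ℝ,
    Tendsto (fun j => weylDinf d 1 f (fun t => f (t + τ j))) atTop (nhds 0) →
    Tendsto (fun j => Complex.exp (Complex.I * ((lam * τ j : ℝ) : ℂ))) atTop (nhds 1)}

/-- `κ_W(T) = lim_{l → +∞} sup_ξ (1/l) meas([ξ, ξ+l] ∩ T)` (formalized as a `limsup`). -/
def kappaW (T : Set ℝ) : ℝ≥0∞ :=
  Filter.limsup (fun l : ℝ => ⨆ ξ : ℝ,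
    ENNReal.ofReal (1 / l) * MeasureTheory.volume (Set.Icc ξ (ξ + l) ∩ T)) Filter.atTop

/-- Membership in `M*_p(ℝ, α)`. -/
def MemMpStar {α : Type*} [TopologicalSpace α] (d : α → α → ℝ) (p : ℝ) (x₀ : α)
    (f : ℝ → α) : Prop :=
  MemMp d p x₀ f ∧
  ∀ ε > 0, ∃ δ > 0, ∀ T : Set ℝ, MeasurableSet T → kappaW T < ENNReal.ofReal δ →
    Filter.limsup (fun l : ℝ => ⨆ ξ : ℝ, ENNReal.ofReal (1 / l) *
        ∫⁻ t in Set.Icc ξ (ξ + l) ∩ T, ENNReal.ofReal (d (f t) x₀ ^ p)) Filter.atTop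
      < ENNReal.ofReal ε

/-- Distance from a point to a set w.r.t. the distance `d`, valued in `ℝ≥0∞`
(`∞` for the empty set). -/
def dInfDist {α : Type*} (d : α → α → ℝ) (x : α) (K : Set α) : ℝ≥0∞ :=
  ⨅ y ∈ K, ENNReal.ofReal (d x y)

/-- Membership in `W̃_p(ℝ, α)`: conditions 1) (relatively dense sets of
`(ε, D^{(d)}_p)`-almost periods) and 2) (approximate compactness of values). -/
def MemWpTilde {α : Type*} [TopologicalSpace α] (d : α → α → ℝ) (p : ℝ) (x₀ : α)
    (f : ℝ → α) : Prop :=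
  MemMp d p x₀ f ∧
  (∀ ε > 0, RelDense (APeriods d p ε f)) ∧
  (∀ ε > 0, ∀ δ > 0, ∃ K : Set α, IsCompact K ∧
      kappaW {t | ENNReal.ofReal ε ≤ dInfDist d (f t) K} < ENNReal.ofReal δ)

/-- The support of a Borel measure on a topological space. -/
def measSupport {α : Type*} [TopologicalSpace α] [MeasurableSpace α]
    (μ : Measure α) : Set α :=
  {x | ∀ V : Set α, IsOpen V → x ∈ V → 0 < μ V}

/-- `r_δ(x, μ) = inf { r > 0 : μ[U_r(x)] > δ }`. -/
def rdelta {α : Type*} [PseudoMetricSpace α] [MeasurableSpace α]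
    (x : α) (μ : Measure α) (δ : ℝ) : ℝ :=
  sInf {r : ℝ | 0 < r ∧ ENNReal.ofReal δ < μ (Metric.ball x r)}

/-- The Lévy–Prokhorov distance on Borel probability measures. -/
def lpDist {α : Type*} [MeasurableSpace α] [PseudoEMetricSpace α] :
    ProbabilityMeasure α → ProbabilityMeasure α → ℝ :=
  fun μ ν => MeasureTheory.levyProkhorovDist (μ : Measure α) (ν : Measure α)

end

/-!
On `p`-th powers the metrics `D_{p,l}` become suprema `windowMean l` of means over windows of
length `l`, whose limit `weylMean` as `l → ∞` is bounded by `windowMean l` for every `l`. The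
condition defining `M*_p` says that the excess `ρ^p(f, x₀) - R` (truncated at `0`) has small Weyl
mean for large `R`.

If `f ∈ W_p`, an almost period carries any window into one fixed bounded interval, on which the
excess has small integral by dominated convergence; hence `f ∈ M*_p`. Conversely, `ρ^p` is at most
`η + C ρ'` plus its own excess over a large constant, and for the distance between `f` and a
translate of `f` this excess is controlled, by the triangle inequality, by the excesses of `f` and
of its translate.
-/

/-! ### Window means and the Weyl mean -/

/-- The largest mean of `F` over a window of length `l`. The `p`-th power of the metric `D_{p,l}`
is the window mean of the `p`-th power of the distance. -/
noncomputable def windowMean (l : ℝ) (F : ℝ → ℝ≥0∞) : ℝ≥0∞ :=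
  ⨆ ξ : ℝ, ENNReal.ofReal (1 / l) * ∫⁻ t in Set.Icc ξ (ξ + l), F t

/-- The upper Weyl mean, the limit of the window means as the length of the window tends to
infinity, encoded as a `limsup` like `weylDinf` and `kappaW`. -/
noncomputable def weylMean (F : ℝ → ℝ≥0∞) : ℝ≥0∞ :=
  limsup (fun l => windowMean l F) atTop

section WindowMean

variable {F G : ℝ → ℝ≥0∞} {l : ℝ} {c : ℝ≥0∞}

lemma ofReal_one_div_mul_le_iff (hl : 0 < l) (x : ℝ≥0∞) :
    ENNReal.ofReal (1 / l) * x ≤ c ↔ x ≤ c * ENNReal.ofReal l := by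
  rw [one_div, ENNReal.ofReal_inv_of_pos hl, mul_comm, ← div_eq_mul_inv,
    ENNReal.div_le_iff_le_mul (.inl (ENNReal.ofReal_pos.2 hl).ne') (.inl ENNReal.ofReal_ne_top)]

lemma windowMean_le_iff (hl : 0 < l) :
    windowMean l F ≤ c ↔ ∀ ξ : ℝ, ∫⁻ t in Set.Icc ξ (ξ + l), F t ≤ c * ENNReal.ofReal l := by
  simp only [windowMean, iSup_le_iff, ofReal_one_div_mul_le_iff hl]

lemma setLIntegral_Icc_le_windowMean_mul (hl : 0 < l) (ξ : ℝ) :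
    ∫⁻ t in Set.Icc ξ (ξ + l), F t ≤ windowMean l F * ENNReal.ofReal l :=
  (windowMean_le_iff hl).1 le_rfl ξ

lemma windowMean_mono_ae (h : F ≤ᵐ[volume] G) : windowMean l F ≤ windowMean l G :=
  iSup_mono fun _ => mul_le_mul_right (lintegral_mono_ae (ae_restrict_of_ae h)) _

lemma windowMean_mono (h : ∀ t, F t ≤ G t) : windowMean l F ≤ windowMean l G :=
  windowMean_mono_ae (ae_of_all _ h)

lemma windowMean_add_le (hG : AEMeasurable G) :
    windowMean l (fun t => F t + G t) ≤ windowMean l F + windowMean l G := by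
  refine iSup_le fun ξ => ?_
  rw [lintegral_add_right' F hG.restrict, mul_add]
  exact add_le_add (le_iSup_of_le ξ le_rfl) (le_iSup_of_le ξ le_rfl)

lemma windowMean_const_mul (hc : c ≠ ⊤) :
    windowMean l (fun t => c * F t) = c * windowMean l F := by
  simp only [windowMean, lintegral_const_mul' c _ hc, ENNReal.mul_iSup, mul_left_comm]

lemma windowMean_const_le (hl : 0 < l) : windowMean l (fun _ => c) ≤ c :=
  (windowMean_le_iff hl).2 fun ξ => by simp

lemma windowMean_const_add_le (hl : 0 < l) :
    windowMean l (fun t => c + F t) ≤ c + windowMean l F := by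
  simp only [add_comm c]
  exact (windowMean_add_le aemeasurable_const).trans (by gcongr; exact windowMean_const_le hl)

lemma setLIntegral_Icc_comp_add_right (F : ℝ → ℝ≥0∞) (a b τ : ℝ) :
    ∫⁻ t in Set.Icc a b, F (t + τ) = ∫⁻ t in Set.Icc (a + τ) (b + τ), F t := by
  rw [← Set.image_add_const_Icc]
  exact (measurePreserving_add_right volume τ).setLIntegral_comp_emb
    (MeasurableEquiv.addRight τ).measurableEmbedding F _

lemma windowMean_comp_add_right (τ : ℝ) :
    windowMean l (fun t => F (t + τ)) = windowMean l F := by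
  simp only [windowMean, setLIntegral_Icc_comp_add_right, add_right_comm _ l τ]
  exact (Equiv.addRight τ).iSup_comp
    (g := fun ξ => ENNReal.ofReal (1 / l) * ∫⁻ t in Set.Icc ξ (ξ + l), F t)

lemma setLIntegral_Icc_nat_mul_le (hl : 0 < l) (n : ℕ) (ξ : ℝ) :
    ∫⁻ t in Set.Icc ξ (ξ + n * l), F t ≤ windowMean l F * ENNReal.ofReal (n * l) := by
  induction n with
  | zero => simp
  | succ n ih =>
    have hcover : Set.Icc ξ (ξ + (n + 1 : ℕ) * l) ⊆
        Set.Icc ξ (ξ + n * l) ∪ Set.Icc (ξ + n * l) (ξ + n * l + l) := by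
      rw [Nat.cast_succ, add_one_mul, ← add_assoc]
      exact Set.Icc_subset_Icc_union_Icc
    calc ∫⁻ t in Set.Icc ξ (ξ + (n + 1 : ℕ) * l), F t
        ≤ (∫⁻ t in Set.Icc ξ (ξ + n * l), F t)
          + ∫⁻ t in Set.Icc (ξ + n * l) (ξ + n * l + l), F t :=
          (lintegral_mono_set hcover).trans (lintegral_union_le _ _ _)
      _ ≤ windowMean l F * ENNReal.ofReal (n * l) + windowMean l F * ENNReal.ofReal l :=
          add_le_add ih (setLIntegral_Icc_le_windowMean_mul hl _)
      _ = windowMean l F * ENNReal.ofReal ((n + 1 : ℕ) * l) := by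
          rw [← mul_add, ← ENNReal.ofReal_add (by positivity) hl.le, Nat.cast_succ, add_one_mul]

lemma windowMean_le_ofReal_mul_windowMean {L : ℝ} (hl : 0 < l) (hL : 0 < L) :
    windowMean L F ≤ ENNReal.ofReal (1 + l / L) * windowMean l F := by
  refine (windowMean_le_iff hL).2 fun ξ => ?_
  have hle : L ≤ ⌈L / l⌉₊ * l := (div_le_iff₀ hl).1 (Nat.le_ceil _)
  have hge : ⌈L / l⌉₊ * l ≤ (1 + l / L) * L := by
    have := mul_le_mul_of_nonneg_right (Nat.ceil_lt_add_one (div_pos hL hl).le).le hl.le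
    field_simp at this ⊢
    linarith
  calc ∫⁻ t in Set.Icc ξ (ξ + L), F t
      ≤ ∫⁻ t in Set.Icc ξ (ξ + ⌈L / l⌉₊ * l), F t :=
        lintegral_mono_set (Set.Icc_subset_Icc_right (by gcongr))
    _ ≤ windowMean l F * ENNReal.ofReal (⌈L / l⌉₊ * l) := setLIntegral_Icc_nat_mul_le hl _ _
    _ ≤ windowMean l F * ENNReal.ofReal ((1 + l / L) * L) := by gcongr
    _ = ENNReal.ofReal (1 + l / L) * windowMean l F * ENNReal.ofReal L := by
        rw [ENNReal.ofReal_mul (by positivity), mul_left_comm, mul_assoc]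

lemma windowMean_le_two_mul_windowMean {L : ℝ} (hl : 0 < l) (hL : l ≤ L) :
    windowMean L F ≤ 2 * windowMean l F := by
  have hL0 := hl.trans_le hL
  refine (windowMean_le_ofReal_mul_windowMean hl hL0).trans ?_
  rw [← ENNReal.ofReal_ofNat 2]
  gcongr
  linarith [(div_le_one hL0).2 hL]

lemma setLIntegral_Icc_ne_top (hl : 0 < l) (hF : windowMean l F ≠ ⊤) (a b : ℝ) :
    ∫⁻ t in Set.Icc a b, F t ≠ ⊤ := by
  obtain ⟨n, hn⟩ := exists_nat_ge ((b - a) / l)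
  have hb : b ≤ a + n * l := by linarith [(div_le_iff₀ hl).1 hn]
  exact ne_top_of_le_ne_top (ENNReal.mul_ne_top hF ENNReal.ofReal_ne_top)
    ((lintegral_mono_set (Set.Icc_subset_Icc_right hb)).trans (setLIntegral_Icc_nat_mul_le hl n a))

lemma weylMean_mono_ae (h : F ≤ᵐ[volume] G) : weylMean F ≤ weylMean G :=
  limsup_le_limsup (Eventually.of_forall fun _ => windowMean_mono_ae h)

lemma weylMean_le_windowMean (hl : 0 < l) : weylMean F ≤ windowMean l F := by
  have hone : Tendsto (fun L : ℝ => ENNReal.ofReal (1 + l / L)) atTop (𝓝 1) := by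
    simpa using ENNReal.tendsto_ofReal ((tendsto_const_nhds.div_atTop tendsto_id).const_add 1)
  have hlim := ENNReal.Tendsto.mul_const (b := windowMean l F) hone (.inl one_ne_zero)
  rw [one_mul] at hlim
  rw [← hlim.limsup_eq]
  exact limsup_le_limsup ((eventually_gt_atTop 0).mono fun L hL =>
    windowMean_le_ofReal_mul_windowMean hl hL)

lemma eventually_windowMean_lt (h : weylMean F < c) : ∀ᶠ l in atTop, windowMean l F < c :=
  eventually_lt_of_limsup_lt h

end WindowMean

/-! ### Weyl uniform integrability -/

/-- Uniform integrability with respect to the Weyl mean: `f ∈ M*_p` means that `f ∈ M_p` and that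
`ρ^p(f, x₀)` has this property. -/
def IsWeylUniformlyIntegrable (h : ℝ → ℝ≥0∞) : Prop :=
  ∀ ε > 0, ∃ δ > 0, ∀ T : Set ℝ, MeasurableSet T →
    weylMean (T.indicator 1) < δ → weylMean (T.indicator h) < ε

section UniformIntegrability

variable {h : ℝ → ℝ≥0∞}

lemma IsWeylUniformlyIntegrable.exists_weylMean_tsub_lt {l : ℝ} (hui : IsWeylUniformlyIntegrable h)
    (hm : AEMeasurable h) (hl : 0 < l) (hfin : windowMean l h ≠ ⊤) {ε : ℝ≥0∞} (hε : 0 < ε) :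
    ∃ R ≠ ⊤, weylMean (fun t => h t - R) < ε := by
  obtain ⟨δ, hδ, hT⟩ := hui ε hε
  obtain ⟨n, hn⟩ := ENNReal.exists_nat_mul_gt hδ.ne' hfin
  refine ⟨n, ENNReal.natCast_ne_top n, ?_⟩
  set T : Set ℝ := {t | (n : ℝ≥0∞) ≤ hm.mk h t}
  have hmarkov : n * windowMean l (T.indicator 1) ≤ windowMean l h := by
    rw [← windowMean_const_mul (ENNReal.natCast_ne_top n)]
    refine windowMean_mono_ae (hm.ae_eq_mk.mono fun t ht => ?_)
    by_cases htT : t ∈ T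
    · have hle : n ≤ hm.mk h t := htT
      simpa [htT, ht] using hle
    · simp [htT]
  have hsmall : weylMean (T.indicator 1) < δ := by
    refine (weylMean_le_windowMean hl).trans_lt (lt_of_not_ge fun hge => ?_)
    exact hn.not_ge ((mul_le_mul_right hge _).trans hmarkov)
  refine (weylMean_mono_ae (hm.ae_eq_mk.mono fun t ht => ?_)).trans_lt
    (hT T (measurableSet_le measurable_const hm.measurable_mk) hsmall)
  by_cases htT : t ∈ T
  · simp [htT]
  · have hlt : ¬ n ≤ hm.mk h t := htT
    simp [htT, ht, tsub_eq_zero_of_le (not_le.1 hlt).le]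

lemma isWeylUniformlyIntegrable_of_forall_exists_weylMean_tsub_lt
    (htail : ∀ ε > 0, ∃ R ≠ ⊤, weylMean (fun t => h t - R) < ε) :
    IsWeylUniformlyIntegrable h := by
  intro ε hε
  obtain ⟨r, hr, hrε⟩ := exists_between hε
  obtain ⟨R, hR, hexcess⟩ := htail (r / 2) (ENNReal.half_pos hr.ne')
  refine ⟨r / 2 / R, ENNReal.div_pos (ENNReal.half_pos hr.ne').ne' hR, fun T hT hsmall => ?_⟩
  obtain ⟨l, ⟨hlT, hlh⟩, hl⟩ := ((eventually_windowMean_lt hsmall).and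
    (eventually_windowMean_lt hexcess)).and (eventually_gt_atTop 0) |>.exists
  have hsplit (t : ℝ) : T.indicator h t ≤ h t - R + R * T.indicator 1 t := by
    by_cases ht : t ∈ T <;> simp [ht, le_tsub_add]
  calc weylMean (T.indicator h)
      ≤ windowMean l (T.indicator h) := weylMean_le_windowMean hl
    _ ≤ windowMean l (fun t => h t - R) + R * windowMean l (T.indicator 1) := by
        rw [← windowMean_const_mul hR]
        exact (windowMean_mono hsplit).trans
          (windowMean_add_le ((measurable_one.indicator hT).const_mul R).aemeasurable)
    _ ≤ r / 2 + R * (r / 2 / R) := by gcongr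
    _ ≤ r / 2 + r / 2 := by gcongr; exact ENNReal.mul_div_le
    _ < ε := by rwa [ENNReal.add_halves]

lemma tendsto_lintegral_tsub_natCast {α : Type*} {_ : MeasurableSpace α} {μ : Measure α}
    {h : α → ℝ≥0∞} (hm : AEMeasurable h μ) (hfin : ∫⁻ t, h t ∂μ ≠ ⊤) :
    Tendsto (fun n : ℕ => ∫⁻ t, (h t - n) ∂μ) atTop (𝓝 0) := by
  have hlim : ∀ᵐ t ∂μ, Tendsto (fun n : ℕ => h t - n) atTop (𝓝 0) := by
    filter_upwards [ae_lt_top' hm hfin] with t ht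
    obtain ⟨N, hN⟩ := ENNReal.exists_nat_gt ht.ne
    exact tendsto_atTop_of_eventually_const fun n (hn : N ≤ n) =>
      tsub_eq_zero_of_le (hN.le.trans (by exact_mod_cast hn))
  simpa using tendsto_lintegral_of_dominated_convergence' h (fun n => hm.sub aemeasurable_const)
    (fun n => ae_of_all _ fun t => tsub_le_self) hfin hlim

end UniformIntegrability

/-! ### Weyl almost periods -/

lemma RelDense.mono {S T : Set ℝ} (hS : RelDense S) (hST : S ⊆ T) : RelDense T :=
  let ⟨a, ha, h⟩ := hS
  ⟨a, ha, fun ξ => (h ξ).mono (Set.inter_subset_inter_right _ hST)⟩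

/-- Weyl almost periodicity expressed through the deviation `G τ t` of a function at `t` from its
translate by `τ`; for `W_p` the deviation is `ρ^p(f(t), f(t + τ))`. -/
def HasWeylAlmostPeriods (G : ℝ → ℝ → ℝ≥0∞) : Prop :=
  ∀ ε > 0, ∃ l > 0, RelDense {τ | windowMean l (G τ) < ε}

lemma HasWeylAlmostPeriods.of_windowMean_le {G G' : ℝ → ℝ → ℝ≥0∞} (hG : HasWeylAlmostPeriods G)
    (hle : ∀ η > 0, ∃ C ≠ ⊤, ∀ᶠ l in atTop, ∀ τ,
      windowMean l (G' τ) ≤ η + C * windowMean l (G τ)) :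
    HasWeylAlmostPeriods G' := by
  intro ε hε
  obtain ⟨r, hr, hrε⟩ := exists_between hε
  have hr2 := ENNReal.half_pos hr.ne'
  obtain ⟨C, hC, hle⟩ := hle (r / 2) hr2
  obtain ⟨l₀, hl₀, hdense⟩ :=
    hG (r / 2 / (C * 2)) (ENNReal.div_pos hr2.ne' (ENNReal.mul_ne_top hC ENNReal.ofNat_ne_top))
  obtain ⟨l, hl, hl₀l⟩ := (hle.and (eventually_ge_atTop l₀)).exists
  refine ⟨l, hl₀.trans_le hl₀l, hdense.mono fun τ hτ => ?_⟩
  rw [Set.mem_ofPred_eq] at hτ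
  calc windowMean l (G' τ)
      ≤ r / 2 + C * windowMean l (G τ) := hl τ
    _ ≤ r / 2 + C * (2 * windowMean l₀ (G τ)) := by
        gcongr; exact windowMean_le_two_mul_windowMean hl₀ hl₀l
    _ ≤ r / 2 + C * 2 * (r / 2 / (C * 2)) := by rw [mul_assoc]; gcongr
    _ ≤ r / 2 + r / 2 := by gcongr; exact ENNReal.mul_div_le
    _ < ε := by rwa [ENNReal.add_halves]

/-! ### Comparison of `ρ^p` with the truncated distance -/

section Powers

variable {p : ℝ} {η : ℝ≥0∞}

lemma min_one_le_add_inv_rpow_mul_rpow (hp : 0 < p) (hη : 0 < η) (x : ℝ≥0∞) :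
    min 1 x ≤ η + η⁻¹ ^ p * x ^ p := by
  rcases le_or_gt x η with hx | hx
  · exact (min_le_right _ _).trans (hx.trans le_self_add)
  · have hone : 1 ≤ η⁻¹ * x := by
      rw [← ENNReal.inv_mul_cancel hη.ne' hx.ne_top]
      gcongr
    rw [← ENNReal.mul_rpow_of_nonneg _ _ hp.le]
    exact (min_le_left _ _).trans ((ENNReal.one_le_rpow hone hp).trans le_add_self)

lemma exists_rpow_le_add_mul_min_one_add_tsub (hp : 0 < p) (hη : 0 < η) {M : ℝ≥0∞} (hM : M ≠ ⊤) :
    ∃ C ≠ ⊤, ∀ x : ℝ≥0∞, x ^ p ≤ η + C * min 1 x + (x ^ p - M) := by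
  set r : ℝ≥0∞ := min 1 (η ^ p⁻¹)
  have hr0 : r ≠ 0 := by simp [r, hη.ne', hp, hp.le]
  have hrtop : r ≠ ⊤ := ne_top_of_le_ne_top ENNReal.one_ne_top (min_le_left _ _)
  refine ⟨M / r, ENNReal.div_ne_top hM hr0, fun x => ?_⟩
  rcases le_or_gt x r with hx | hx
  · have : x ^ p ≤ η := (ENNReal.le_rpow_inv_iff hp).1 (hx.trans (min_le_right _ _))
    exact this.trans (le_add_right le_self_add)
  · have hMle : M ≤ M / r * min 1 x := by
      calc M = M / r * r := (ENNReal.div_mul_cancel hr0 hrtop).symm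
        _ ≤ M / r * min 1 x := by gcongr; exact le_min (min_le_left _ _) hx.le
    calc x ^ p ≤ M + (x ^ p - M) := le_add_tsub
      _ ≤ η + M / r * min 1 x + (x ^ p - M) := by gcongr; exact hMle.trans le_add_self

lemma tsub_mul_add_le_of_le_mul_add {x a b K : ℝ≥0∞} (R S : ℝ≥0∞) (h : x ≤ K * (a + b)) :
    x - K * (R + S) ≤ K * ((a - R) + (b - S)) := by
  rw [tsub_le_iff_right, ← mul_add, add_add_add_comm]
  exact h.trans (by gcongr <;> exact le_tsub_add)

lemma exists_edist_rpow_le_mul_add {U : Type*} [PseudoEMetricSpace U] (hp : 0 ≤ p) :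
    ∃ K ≠ ⊤, ∀ x y z : U, edist x z ^ p ≤ K * (edist x y ^ p + edist y z ^ p) :=
  ⟨ENNReal.LpAddConst (ENNReal.ofReal p)⁻¹, (ENNReal.LpAddConst_lt_top _).ne, fun x y z =>
    (ENNReal.rpow_le_rpow (edist_triangle x y z) hp).trans
      (ENNReal.rpow_add_le_mul_rpow_add_rpow' _ _ hp)⟩

lemma exists_edist_rpow_le_add_tsub_add_tsub {U : Type*} [PseudoEMetricSpace U] (hp : 0 < p) :
    ∃ K ≠ ⊤, ∀ η > 0, ∀ R ≠ ⊤, ∃ C ≠ ⊤, ∀ x y z : U, edist x y ^ p ≤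
      η + C * min 1 (edist x y) + K * ((edist x z ^ p - R) + (edist y z ^ p - R)) := by
  obtain ⟨K, hK, htri⟩ := exists_edist_rpow_le_mul_add (U := U) hp.le
  refine ⟨K, hK, fun η hη R hR => ?_⟩
  obtain ⟨C, hC, hpow⟩ := exists_rpow_le_add_mul_min_one_add_tsub hp hη
    (ENNReal.mul_ne_top hK (ENNReal.add_ne_top.2 ⟨hR, hR⟩))
  refine ⟨C, hC, fun x y z => (hpow (edist x y)).trans ?_⟩
  have hquasi := htri x z y
  rw [edist_comm z y] at hquasi
  gcongr
  exact tsub_mul_add_le_of_le_mul_add R R hquasi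

end Powers

/-! ### Almost periods and excesses of functions with values in a metric space -/

section MetricValued

variable {U : Type*} [PseudoMetricSpace U] {f : ℝ → U} {x₀ : U} {p : ℝ} {ε : ℝ≥0∞}

lemma HasWeylAlmostPeriods.min_one_edist (hp : 0 < p)
    (hf : HasWeylAlmostPeriods fun τ t => edist (f t) (f (t + τ)) ^ p) :
    HasWeylAlmostPeriods fun τ t => min 1 (edist (f t) (f (t + τ))) := by
  refine hf.of_windowMean_le fun η hη => ?_
  have hC : η⁻¹ ^ p ≠ ⊤ := ENNReal.rpow_ne_top_of_nonneg hp.le (ENNReal.inv_ne_top.2 hη.ne')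
  refine ⟨η⁻¹ ^ p, hC, (eventually_gt_atTop 0).mono fun l hl τ => ?_⟩
  rw [← windowMean_const_mul hC]
  exact (windowMean_mono fun t => min_one_le_add_inv_rpow_mul_rpow hp hη _).trans
    (windowMean_const_add_le hl)

lemma aemeasurable_edist_rpow (hf : AEStronglyMeasurable f) (x₀ : U) (p : ℝ) :
    AEMeasurable fun t => edist (f t) x₀ ^ p :=
  (hf.edist aestronglyMeasurable_const).pow_const p

lemma exists_setLIntegral_edist_rpow_tsub_le (hp : 0 ≤ p) (hf : AEStronglyMeasurable f) (x₀ : U) :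
    ∃ K ≠ ⊤, ∀ (R : ℝ≥0∞) (a b τ : ℝ),
      ∫⁻ t in Set.Icc a b, (edist (f t) x₀ ^ p - K * R) ≤
        K * ((∫⁻ t in Set.Icc a b, edist (f t) (f (t + τ)) ^ p) +
          ∫⁻ t in Set.Icc (a + τ) (b + τ), (edist (f t) x₀ ^ p - R)) := by
  obtain ⟨K, hK, htri⟩ := exists_edist_rpow_le_mul_add (U := U) hp
  refine ⟨K, hK, fun R a b τ => ?_⟩
  have hm : AEMeasurable fun t => edist (f (t + τ)) x₀ ^ p - R :=
    ((aemeasurable_edist_rpow hf x₀ p).sub aemeasurable_const).comp_quasiMeasurePreserving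
      (quasiMeasurePreserving_add_right volume τ)
  rw [← setLIntegral_Icc_comp_add_right (fun t => edist (f t) x₀ ^ p - R),
    ← lintegral_add_right' _ hm.restrict, ← lintegral_const_mul' _ _ hK]
  exact lintegral_mono fun t => by
    simpa using tsub_mul_add_le_of_le_mul_add 0 R (htri (f t) (f (t + τ)) x₀)

lemma HasWeylAlmostPeriods.exists_weylMean_edist_rpow_tsub_lt {l : ℝ} (hp : 0 ≤ p)
    (hW : HasWeylAlmostPeriods fun τ t => edist (f t) (f (t + τ)) ^ p)
    (hf : AEStronglyMeasurable f) (hl : 0 < l)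
    (hfin : windowMean l (fun t => edist (f t) x₀ ^ p) ≠ ⊤) (hε : 0 < ε) :
    ∃ R ≠ ⊤, weylMean (fun t => edist (f t) x₀ ^ p - R) < ε := by
  obtain ⟨K, hK, htranslate⟩ := exists_setLIntegral_edist_rpow_tsub_le hp hf x₀
  obtain ⟨r, hr, hrε⟩ := exists_between hε
  set e := r / K / 2
  have he : 0 < e := ENNReal.half_pos (ENNReal.div_pos hr.ne' hK).ne'
  have hKe : K * (e + e) ≤ r := by rw [ENNReal.add_halves]; exact ENNReal.mul_div_le
  obtain ⟨w, hw, a, -, hdense⟩ := hW e he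
  have hew : 0 < e * ENNReal.ofReal w := ENNReal.mul_pos he.ne' (ENNReal.ofReal_pos.2 hw).ne'
  obtain ⟨n, hn⟩ := ((tendsto_lintegral_tsub_natCast (aemeasurable_edist_rpow hf x₀ p).restrict
    (setLIntegral_Icc_ne_top hl hfin 0 (a + w))).eventually_lt_const hew).exists
  refine ⟨K * n, ENNReal.mul_ne_top hK (ENNReal.natCast_ne_top n),
    (weylMean_le_windowMean hw).trans_lt (((windowMean_le_iff hw).2 fun ξ => ?_).trans_lt hrε)⟩
  -- An almost period in `[-ξ, -ξ + a]` carries the window at `ξ` into `[0, a + w]`.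
  obtain ⟨τ, ⟨hτ₀, hτa⟩, hτ⟩ := hdense (-ξ)
  have hdeviation : ∫⁻ t in Set.Icc ξ (ξ + w), edist (f t) (f (t + τ)) ^ p
      ≤ e * ENNReal.ofReal w :=
    (windowMean_le_iff hw).1 (le_of_lt hτ) ξ
  have hexcess : ∫⁻ t in Set.Icc (ξ + τ) (ξ + w + τ), (edist (f t) x₀ ^ p - n)
      ≤ e * ENNReal.ofReal w :=
    (lintegral_mono_set (Set.Icc_subset_Icc (by linarith) (by linarith))).trans hn.le
  calc ∫⁻ t in Set.Icc ξ (ξ + w), (edist (f t) x₀ ^ p - K * n)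
      ≤ K * (e * ENNReal.ofReal w + e * ENNReal.ofReal w) :=
        (htranslate n ξ (ξ + w) τ).trans (by gcongr)
    _ = K * (e + e) * ENNReal.ofReal w := by rw [← add_mul, ← mul_assoc]
    _ ≤ r * ENNReal.ofReal w := by gcongr

lemma HasWeylAlmostPeriods.edist_rpow (hp : 0 < p)
    (hW : HasWeylAlmostPeriods fun τ t => min 1 (edist (f t) (f (t + τ))))
    (hf : AEStronglyMeasurable f)
    (htail : ∀ ε > 0, ∃ R ≠ ⊤, weylMean (fun t => edist (f t) x₀ ^ p - R) < ε) :
    HasWeylAlmostPeriods fun τ t => edist (f t) (f (t + τ)) ^ p := by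
  obtain ⟨K, hK, hpow⟩ := exists_edist_rpow_le_add_tsub_add_tsub (U := U) hp
  refine hW.of_windowMean_le fun η hη => ?_
  have hη2 := ENNReal.half_pos hη.ne'
  set e := η / 2 / K / 2
  have hKe : K * (e + e) ≤ η / 2 := by rw [ENNReal.add_halves]; exact ENNReal.mul_div_le
  obtain ⟨R, hR, hexcess⟩ := htail e (ENNReal.half_pos (ENNReal.div_pos hη2.ne' hK).ne')
  obtain ⟨C, hC, hpow⟩ := hpow (η / 2) hη2 R hR
  refine ⟨C, hC, ?_⟩
  filter_upwards [eventually_windowMean_lt hexcess, eventually_gt_atTop 0] with l hle hl τ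
  set E : ℝ → ℝ≥0∞ := fun t => edist (f t) x₀ ^ p - R
  have hE : AEMeasurable E := (aemeasurable_edist_rpow hf x₀ p).sub aemeasurable_const
  have hEτ : AEMeasurable fun t => E (t + τ) :=
    hE.comp_quasiMeasurePreserving (quasiMeasurePreserving_add_right volume τ)
  have hEE : windowMean l (fun t => E t + E (t + τ)) ≤ e + e := by
    refine (windowMean_add_le hEτ).trans ?_
    rw [windowMean_comp_add_right]
    exact add_le_add hle.le hle.le
  set B := windowMean l (fun t => min 1 (edist (f t) (f (t + τ))))
  calc windowMean l (fun t => edist (f t) (f (t + τ)) ^ p)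
      ≤ windowMean l (fun t => η / 2 + C * min 1 (edist (f t) (f (t + τ))))
        + windowMean l (fun t => K * (E t + E (t + τ))) :=
        (windowMean_mono fun t => hpow _ _ x₀).trans
          (windowMean_add_le ((hE.add hEτ).const_mul K))
    _ ≤ η / 2 + C * B + K * (e + e) := by
        rw [windowMean_const_mul hK, ← windowMean_const_mul hC]
        gcongr
        exact windowMean_const_add_le hl
    _ ≤ η / 2 + C * B + η / 2 := by gcongr
    _ = η + C * B := by rw [add_right_comm, ENNReal.add_halves]

end MetricValued

/-! ### The function spaces in terms of window means -/

section FunctionSpaces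

lemma exists_pos_ofReal_lt {ε : ℝ≥0∞} (hε : 0 < ε) : ∃ r : ℝ, 0 < r ∧ ENNReal.ofReal r < ε := by
  obtain ⟨r, -, hr, hrε⟩ := ENNReal.lt_iff_exists_real_btwn.1 hε
  exact ⟨r, ENNReal.ofReal_pos.1 hr, hrε⟩

variable {α : Type*} {d : α → α → ℝ} {p : ℝ} {f : ℝ → α} {x₀ : α}

lemma weylD_lt_iff {l : ℝ} {g : ℝ → α} {ε : ℝ≥0∞} (hp : 0 < p) :
    weylD d p l f g < ε ↔ windowMean l (fun t => ENNReal.ofReal (d (f t) (g t) ^ p)) < ε ^ p := by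
  rw [weylD, one_div p, ENNReal.rpow_inv_lt_iff hp, windowMean]

lemma forall_relDense_aPeriodsL_iff (hp : 0 < p) :
    (∀ ε > 0, ∃ l > 0, RelDense (APeriodsL d p l ε f)) ↔
      HasWeylAlmostPeriods fun τ t => ENNReal.ofReal (d (f t) (f (t + τ)) ^ p) := by
  simp only [APeriodsL, weylD_lt_iff hp, HasWeylAlmostPeriods]
  constructor
  · intro h ε hε
    obtain ⟨r, hr, hrε⟩ := exists_pos_ofReal_lt (ENNReal.rpow_pos_of_nonneg hε (inv_pos.2 hp).le)
    obtain ⟨l, hl, hdense⟩ := h r hr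
    exact ⟨l, hl, hdense.mono fun τ hτ => lt_trans hτ ((ENNReal.lt_rpow_inv_iff hp).1 hrε)⟩
  · exact fun h ε hε => h _ (ENNReal.rpow_pos (ENNReal.ofReal_pos.2 hε) ENNReal.ofReal_ne_top)

lemma weylMean_indicator {h : ℝ → ℝ≥0∞} {T : Set ℝ} (hT : MeasurableSet T) :
    weylMean (T.indicator h) = limsup (fun l : ℝ => ⨆ ξ : ℝ, ENNReal.ofReal (1 / l) *
      ∫⁻ t in Set.Icc ξ (ξ + l) ∩ T, h t) atTop := by
  simp only [weylMean, windowMean, setLIntegral_indicator hT, Set.inter_comm T]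

lemma kappaW_eq_weylMean {T : Set ℝ} (hT : MeasurableSet T) :
    kappaW T = weylMean (T.indicator 1) := by
  simp only [kappaW, weylMean_indicator hT, Pi.one_apply, setLIntegral_one]

variable [TopologicalSpace α]

lemma memMp_iff : MemMp d p x₀ f ↔ AEStronglyMeasurable f volume ∧
    windowMean 1 (fun t => ENNReal.ofReal (d (f t) x₀ ^ p)) ≠ ⊤ := by
  have hbound (c : ℝ≥0∞) : windowMean 1 (fun t => ENNReal.ofReal (d (f t) x₀ ^ p)) ≤ c ↔
      ∀ ξ : ℝ, ∫⁻ t in Set.Icc ξ (ξ + 1), ENNReal.ofReal (d (f t) x₀ ^ p) ≤ c := by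
    rw [windowMean_le_iff one_pos, ENNReal.ofReal_one, mul_one]
  simp only [MemMp, ← hbound]
  refine and_congr_right fun _ => ⟨fun ⟨C, hC⟩ => ne_top_of_le_ne_top ENNReal.ofReal_ne_top hC,
    fun h => ⟨_, (ENNReal.ofReal_toReal h).ge⟩⟩

lemma memMpStar_iff : MemMpStar d p x₀ f ↔ MemMp d p x₀ f ∧
    IsWeylUniformlyIntegrable fun t => ENNReal.ofReal (d (f t) x₀ ^ p) := by
  refine and_congr_right fun _ => ⟨fun h ε hε => ?_, fun h ε hε => ?_⟩
  · obtain ⟨r, hr, hrε⟩ := exists_pos_ofReal_lt hε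
    obtain ⟨δ, hδ, hT⟩ := h r hr
    refine ⟨ENNReal.ofReal δ, ENNReal.ofReal_pos.2 hδ, fun T hTm hsmall => ?_⟩
    rw [← kappaW_eq_weylMean hTm] at hsmall
    rw [weylMean_indicator hTm]
    exact (hT T hTm hsmall).trans hrε
  · obtain ⟨δ, hδ, hT⟩ := h _ (ENNReal.ofReal_pos.2 hε)
    obtain ⟨r, hr, hrδ⟩ := exists_pos_ofReal_lt hδ
    refine ⟨r, hr, fun T hTm hsmall => ?_⟩
    rw [kappaW_eq_weylMean hTm] at hsmall
    rw [← weylMean_indicator hTm]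
    exact hT T hTm (hsmall.trans hrδ)

end FunctionSpaces

section Distances

variable {U : Type*} [PseudoMetricSpace U] {f : ℝ → U} {x₀ : U} {p : ℝ}

lemma ofReal_dist_rpow (hp : 0 ≤ p) (x y : U) :
    ENNReal.ofReal (dist x y ^ p) = edist x y ^ p := by
  rw [edist_dist, ENNReal.ofReal_rpow_of_nonneg dist_nonneg hp]

lemma ofReal_bdist (x y : U) : ENNReal.ofReal (bdist x y) = min 1 (edist x y) := by
  rw [bdist, ENNReal.ofReal_min, ENNReal.ofReal_one, edist_dist]

lemma memMp_dist_iff (hp : 0 ≤ p) : MemMp dist p x₀ f ↔ AEStronglyMeasurable f volume ∧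
    windowMean 1 (fun t => edist (f t) x₀ ^ p) ≠ ⊤ := by
  simp only [memMp_iff, ofReal_dist_rpow hp]

lemma memWp_dist_iff (hp : 0 < p) : MemWp dist p x₀ f ↔ MemMp dist p x₀ f ∧
    HasWeylAlmostPeriods fun τ t => edist (f t) (f (t + τ)) ^ p := by
  simp only [MemWp, forall_relDense_aPeriodsL_iff hp, ofReal_dist_rpow hp.le]

lemma memMpStar_dist_iff (hp : 0 ≤ p) : MemMpStar dist p x₀ f ↔ MemMp dist p x₀ f ∧
    IsWeylUniformlyIntegrable fun t => edist (f t) x₀ ^ p := by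
  simp only [memMpStar_iff, ofReal_dist_rpow hp]

lemma memMp_bdist_one_iff : MemMp bdist 1 x₀ f ↔ AEStronglyMeasurable f volume := by
  simp only [memMp_iff, Real.rpow_one, ofReal_bdist, and_iff_left_iff_imp]
  exact fun _ => ne_top_of_le_ne_top ENNReal.one_ne_top
    ((windowMean_mono fun t => min_le_left _ _).trans (windowMean_const_le one_pos))

lemma memWp_bdist_one_iff : MemWp bdist 1 x₀ f ↔ AEStronglyMeasurable f volume ∧
    HasWeylAlmostPeriods fun τ t => min 1 (edist (f t) (f (t + τ))) := by
  simp only [MemWp, forall_relDense_aPeriodsL_iff one_pos, memMp_bdist_one_iff, Real.rpow_one,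
    ofReal_bdist]

end Distances

theorem weyl_ap_order_p_iff_general {U : Type*} [PseudoMetricSpace U] (x₀ : U)
    {p : ℝ} (hp : 0 < p) (f : ℝ → U) :
    MemWp dist p x₀ f ↔ (MemWp bdist 1 x₀ f ∧ MemMpStar dist p x₀ f) := by
  rw [memWp_dist_iff hp, memWp_bdist_one_iff, memMpStar_dist_iff hp.le]
  constructor
  · rintro ⟨hM, hW⟩
    obtain ⟨hf, hfin⟩ := (memMp_dist_iff hp.le).1 hM
    exact ⟨⟨hf, hW.min_one_edist hp⟩, hM,
      isWeylUniformlyIntegrable_of_forall_exists_weylMean_tsub_lt fun ε hε =>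
        hW.exists_weylMean_edist_rpow_tsub_lt hp.le hf one_pos hfin hε⟩
  · rintro ⟨⟨hf, hW⟩, hM, hui⟩
    exact ⟨hM, hW.edist_rpow hp hf fun ε hε =>
      hui.exists_weylMean_tsub_lt (aemeasurable_edist_rpow hf x₀ p) one_pos
        ((memMp_dist_iff hp.le).1 hM).2 hε⟩

/-- **`W_p(ℝ,U) = W(ℝ,U) ∩ M*_p(ℝ,U)`.**
A function `f ∈ M_p(ℝ,U)` is Weyl a.p. of order `p` iff it is Weyl a.p. w.r.t. the
bounded metric `ρ'` and satisfies the `M*_p` uniform integrability condition. -/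
theorem weyl_ap_order_p_iff {U : Type*} [MetricSpace U] [CompleteSpace U] (x₀ : U)
    (p : ℝ) (hp : 1 ≤ p) (f : ℝ → U) :
    MemWp dist p x₀ f ↔ (MemWp bdist 1 x₀ f ∧ MemMpStar dist p x₀ f) :=
  weyl_ap_order_p_iff_general x₀ (zero_lt_one.trans_le hp) f
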